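/- Let L be a field and R a Noetherian integrally closed (normal) domain whose field of fractions K is a subfield of L. Let M be a finite-dimensional L-vector space, T : M → M an L-linear endomorphism, and e : M → (ℕ → L) an injective L-linear map. Define M₀ := {m ∈ M | e(m)(n) ∈ R for all n ∈ ℕ}. Assume (i) M₀ spans M as an L-vector space, and (ii) T(M₀) ⊆ M₀. Then every eigenvalue λ ∈ L of T is algebraic over K. -/

import Mathlib

/-!
Let `W` be the `K`-span of `M₀`. Since `e` is injective and `M` is finite-dimensional, finitely many
of the coordinates `m ↦ e m n` already separate the points of `M`
(`exists_coordinates_separate`). These coordinates take values in `K` on `W`, so `W` embeds into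
some `K ^ N` and is finite-dimensional over `K`. As `T` preserves `M₀`, it restricts to a `K`-linear
endomorphism of `W`, which is annihilated by a monic polynomial `p` over `K`. Then `p(T)` vanishes
on `W`, which spans `M` over `L`, hence `p(T) = 0` and every eigenvalue of `T` is a root of `p`.
-/

/-- The submodules of vectors whose first `N` coordinates vanish form a decreasing chain with
intersection `0`, so one of them is `0`. -/
lemma exists_coordinates_separate {L M : Type*} [Field L] [AddCommGroup M] [Module L M]
    [FiniteDimensional L M] (e : M →ₗ[L] (ℕ → L)) (he : Function.Injective e) :
    ∃ N : ℕ, ∀ m : M, (∀ i < N, e m i = 0) → m = 0 := by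
  let F : ℕ →o (Submodule L M)ᵒᵈ :=
    { toFun := fun N => OrderDual.toDual
        { carrier := {m | ∀ i < N, e m i = 0}
          add_mem' := fun {a b} ha hb i hi => by simp [ha i hi, hb i hi]
          zero_mem' := fun i _ => by simp
          smul_mem' := fun c x hx i hi => by simp [hx i hi] }
      monotone' := fun a b hab m hm i hi => hm i (lt_of_lt_of_le hi hab) }
  obtain ⟨N, hN⟩ := IsArtinian.monotone_stabilizes F
  refine ⟨N, fun m hm => he ?_⟩
  ext i
  have h1 : m ∈ OrderDual.ofDual (F N) := hm
  rw [hN (max N (i + 1)) (le_max_left _ _)] at h1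
  simpa using h1 i (lt_of_lt_of_le (Nat.lt_succ_self i) (le_max_right _ _))

/-- Let `L` be a field and `R` a Noetherian integrally closed domain whose fraction field
`K` is a subfield of `L`. Let `M` be a finite-dimensional `L`-vector space, `T` an
`L`-linear endomorphism of `M`, and `e : M → (ℕ → L)` an injective `L`-linear map. Define
`M₀ = {m | e m n ∈ R for all n}`. If `M₀` spans `M` over `L` and `T(M₀) ⊆ M₀`, then every
eigenvalue `λ ∈ L` of `T` is algebraic over `K`. -/
theorem stmt_5
    {R : Type*} [CommRing R] [IsDomain R] [IsNoetherianRing R] [IsIntegrallyClosed R]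
    {K : Type*} [Field K] [Algebra R K] [IsFractionRing R K]
    {L : Type*} [Field L] [Algebra K L] [Algebra R L] [IsScalarTower R K L]
    {M : Type*} [AddCommGroup M] [Module L M] [FiniteDimensional L M]
    (T : M →ₗ[L] M) (e : M →ₗ[L] (ℕ → L)) (he : Function.Injective e)
    (hspan : Submodule.span L {m : M | ∀ n : ℕ, e m n ∈ (algebraMap R L).range} = ⊤)
    (hT : ∀ m : M, (∀ n : ℕ, e m n ∈ (algebraMap R L).range) →
      ∀ n : ℕ, e (T m) n ∈ (algebraMap R L).range)
    (lam : L) (hlam : ∃ m : M, m ≠ 0 ∧ T m = lam • m) :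
    IsAlgebraic K lam := by
  let _ : Module K M := Module.compHom M (algebraMap K L)
  have : IsScalarTower K L M := IsScalarTower.of_algebraMap_smul fun _ _ => rfl
  obtain ⟨N, hN⟩ := exists_coordinates_separate e he
  set S : Set M := {m : M | ∀ n : ℕ, e m n ∈ (algebraMap R L).range}
  let W : Submodule K M := Submodule.span K S
  let φ : M →ₗ[K] (Fin N → L) :=
    (LinearMap.pi fun i : Fin N => (LinearMap.proj (i : ℕ)).comp e).restrictScalars K
  have hφ : Function.Injective φ := by
    rw [injective_iff_map_eq_zero]
    intro m hm
    exact hN m fun i hi => congrFun hm ⟨i, hi⟩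
  let ι : (Fin N → K) →ₗ[K] (Fin N → L) :=
    LinearMap.pi fun i => (Algebra.linearMap K L).comp (LinearMap.proj i)
  have hW : W ≤ (LinearMap.range ι).comap φ := by
    refine Submodule.span_le.2 fun m hm => ?_
    choose r hr using hm
    refine ⟨fun i => algebraMap R K (r i), ?_⟩
    ext i
    exact (IsScalarTower.algebraMap_apply R K L (r i)).symm.trans (hr i)
  have : FiniteDimensional K W := by
    let g : W →ₗ[K] LinearMap.range ι := φ.restrict hW
    exact FiniteDimensional.of_injective g fun a b hab =>
      Subtype.ext (hφ (congrArg Subtype.val hab))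
  have hTW : W ≤ W.comap (T.restrictScalars K) :=
    Submodule.span_le.2 fun m hm => Submodule.subset_span (hT m hm)
  let T' : Module.End K W := (T.restrictScalars K).restrict hTW
  obtain ⟨p, hp, hpT⟩ := Algebra.IsIntegral.isIntegral (R := K) T'
  have hcomm : ∀ (q : Polynomial K) (w : W),
      Polynomial.aeval T (q.map (algebraMap K L)) (w : M) = (Polynomial.aeval T' q w : W) := by
    intro q
    induction q using Polynomial.induction_on with
    | C a => intro w; simp [Module.algebraMap_end_apply]
    | add p q hp hq => intro w; simp [-Polynomial.aeval_map_algebraMap, hp, hq]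
    | monomial n a ih =>
      intro w
      have h := ih (T' w)
      simp only [Polynomial.map_mul, Polynomial.map_pow, Polynomial.map_X, pow_succ,
        ← mul_assoc] at h ⊢
      rw [map_mul, map_mul]
      simpa [T'] using h
  have hzero : Polynomial.aeval T (p.map (algebraMap K L)) = 0 := by
    refine LinearMap.ext_on hspan fun m hm => ?_
    have h := hcomm p ⟨m, Submodule.subset_span hm⟩
    rw [show Polynomial.aeval T' p = 0 from hpT] at h
    exact h
  obtain ⟨m, hm, hTm⟩ := hlam
  have h := Module.End.aeval_apply_of_hasEigenvector (p := p.map (algebraMap K L))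
    (f := T) (μ := lam) (x := m) ⟨Module.End.mem_eigenspace_iff.2 hTm, hm⟩
  rw [hzero, LinearMap.zero_apply, eq_comm, smul_eq_zero, or_iff_left hm,
    Polynomial.eval_map_algebraMap] at h
  exact ⟨p, hp.ne_zero, h⟩
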